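/- For every t ∈ [0,T], the map x ↦ φ_{0,t}(x) is k times continuously differentiable on ℝ^d. -/

import Mathlib

open MeasureTheory intervalIntegral

/-!
On the space `ℝ →ᵇ E` of curves, the integral equation reads `F y = x + w`, where
`F y = y - ∫₀ b(u, y u) du`. Although `b` is only measurable in time, `y ↦ b(·, y ·)` is `C^k` as a
map into `L¹`, by dominated convergence; hence `F` is `C^k`. Integration over `[0, r]` makes
`F' y = 1 - K` with `K` of Volterra type, so that `‖K ^ n‖ ≤ (C T) ^ n / n!`: thus `F' y` is
invertible, and the same iteration shows that `F` is injective. By the inverse function theorem,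
the solution is a `C^k` function of the right-hand side `x + w`, hence of `x`.
-/

noncomputable section

open Filter Topology Set
open scoped NNReal ENNReal BoundedContinuousFunction

section NormedAlgebra

theorem isUnit_one_sub_of_isUnit_one_sub_pow {R : Type*} [Ring R] {a : R} {n : ℕ}
    (h : IsUnit (1 - a ^ n)) : IsUnit (1 - a) := by
  have hcomm : Commute (1 - a) (∑ i ∈ Finset.range n, a ^ i) := by
    rw [Commute, SemiconjBy, mul_neg_geom_sum, geom_sum_mul_neg]
  rw [← mul_neg_geom_sum] at h
  exact (hcomm.isUnit_mul_iff.1 h).1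

end NormedAlgebra

section InverseFunction

variable {𝕜 P X Y : Type*} [RCLike 𝕜] [NormedAddCommGroup P] [NormedSpace 𝕜 P]
  [NormedAddCommGroup X] [NormedSpace 𝕜 X] [CompleteSpace X]
  [NormedAddCommGroup Y] [NormedSpace 𝕜 Y]

theorem contDiffAt_of_comp_injective {n : WithTop ℕ∞} (hn : n ≠ 0) {F : X → Y} {F' : X ≃L[𝕜] Y}
    {S : P → X} {p : P} (hinj : Function.Injective F) (hF : ContDiffAt 𝕜 n F (S p))
    (hF' : HasFDerivAt F (F' : X →L[𝕜] Y) (S p)) (hFS : ContDiffAt 𝕜 n (F ∘ S) p) :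
    ContDiffAt 𝕜 n S p := by
  refine ((hF.to_localInverse hF' hn).comp p hFS).congr_of_eventuallyEq ?_
  filter_upwards [hFS.continuousAt.eventually
    (hF.hasStrictFDerivAt' hF' hn).eventually_right_inverse] with q hq
  exact (hinj hq).symm

end InverseFunction

section ConvergenceInL1

variable {α G : Type*} [MeasurableSpace α] {μ : Measure α} [NormedAddCommGroup G]

theorem tendsto_toL1_of_dominated {ι : Type*} {l : Filter ι} [l.IsCountablyGenerated]
    {f : ι → α → G} {g : α → G} (bound : α → ℝ) (hf : ∀ i, Integrable (f i) μ)
    (hg : Integrable g μ) (hbound : Integrable bound μ)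
    (hle : ∀ᶠ i in l, ∀ᵐ u ∂μ, ‖f i u‖ ≤ bound u)
    (hlim : ∀ᵐ u ∂μ, Tendsto (f · u) l (𝓝 (g u))) :
    Tendsto (fun i ↦ (hf i).toL1 (f i)) l (𝓝 (hg.toL1 g)) := by
  have hnorm (i : ι) : ‖(hf i).toL1 (f i) - hg.toL1 g‖ = ∫ u, ‖f i u - g u‖ ∂μ := by
    rw [← Integrable.toL1_sub, L1.norm_of_fun_eq_integral_norm]
    rfl
  rw [tendsto_iff_norm_sub_tendsto_zero]
  simp_rw [hnorm]
  rw [← integral_zero α ℝ]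
  refine tendsto_integral_filter_of_dominated_convergence (fun u ↦ bound u + ‖g u‖)
    (.of_forall fun i ↦ ((hf i).sub hg).norm.1) ?_ (hbound.add hg.norm) ?_
  · filter_upwards [hle] with i hi
    filter_upwards [hi] with u hu
    rw [norm_norm]
    exact (norm_sub_le _ _).trans (by gcongr)
  · filter_upwards [hlim] with u hu
    exact tendsto_iff_norm_sub_tendsto_zero.1 hu

end ConvergenceInL1

section Nemytskii

universe v

variable {α : Type*} {E G : Type v} [TopologicalSpace α] [MeasurableSpace α]
  [NormedAddCommGroup E] [NormedSpace ℝ E] [NormedAddCommGroup G] [NormedSpace ℝ G]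

/-- A time-dependent map `b` of Carathéodory type: `b u` is `C^k` for almost every `u`, with linear
growth and with derivatives of orders `1, …, k` bounded by `C`. Measurability in time is expressed
along bounded continuous curves, so that no `σ`-algebra on `E` is involved. -/
structure IsCaratheodory (μ : Measure α) (k : ℕ) (C : ℝ≥0) (b : α → E → G) : Prop where
  contDiff : ∀ᵐ u ∂μ, ContDiff ℝ k (b u)
  norm_le : ∀ᵐ u ∂μ, ∀ x, ‖b u x‖ ≤ C * (1 + ‖x‖)
  norm_iteratedFDeriv_le : ∀ᵐ u ∂μ, ∀ j, 1 ≤ j → j ≤ k → ∀ x, ‖iteratedFDeriv ℝ j (b u) x‖ ≤ C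
  aestronglyMeasurable_iteratedFDeriv : ∀ j ≤ k, ∀ y : α →ᵇ E,
    AEStronglyMeasurable (fun u ↦ iteratedFDeriv ℝ j (b u) (y u)) μ

namespace IsCaratheodory

variable {μ : Measure α} {k : ℕ} {C : ℝ≥0} {b : α → E → G}

theorem of_stronglyMeasurable [OpensMeasurableSpace α] [MeasurableSpace E] [BorelSpace E]
    {M C₀ : ℝ} (hcont : ∀ᵐ u ∂μ, ContDiff ℝ k (b u))
    (hgrowth : ∀ᵐ u ∂μ, ∀ x, ‖b u x‖ ≤ C₀ * (1 + ‖x‖))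
    (hbound : ∀ᵐ u ∂μ, ∀ j, 1 ≤ j → j ≤ k → ∀ x, ‖iteratedFDeriv ℝ j (b u) x‖ ≤ M)
    (hmeas : ∀ j ≤ k, StronglyMeasurable fun p : α × E ↦ iteratedFDeriv ℝ j (b p.1) p.2) :
    IsCaratheodory μ k (max M C₀).toNNReal b where
  contDiff := hcont
  norm_le := by
    filter_upwards [hgrowth] with u hu x
    exact (hu x).trans (by gcongr; exact (le_max_right M C₀).trans (Real.le_coe_toNNReal _))
  norm_iteratedFDeriv_le := by
    filter_upwards [hbound] with u hu j hj hjk x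
    exact (hu j hj hjk x).trans ((le_max_left M C₀).trans (Real.le_coe_toNNReal _))
  aestronglyMeasurable_iteratedFDeriv j hj y :=
    ((hmeas j hj).comp_measurable
      (measurable_id.prodMk y.continuous.measurable)).aestronglyMeasurable

theorem aestronglyMeasurable_comp (hb : IsCaratheodory μ k C b) (y : α →ᵇ E) :
    AEStronglyMeasurable (fun u ↦ b u (y u)) μ :=
  (continuousMultilinearCurryFin0 ℝ E G).continuous.comp_aestronglyMeasurable
    (hb.aestronglyMeasurable_iteratedFDeriv 0 k.zero_le y)

theorem integrable_comp [IsFiniteMeasure μ] (hb : IsCaratheodory μ k C b) (y : α →ᵇ E) :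
    Integrable (fun u ↦ b u (y u)) μ := by
  refine .of_bound (hb.aestronglyMeasurable_comp y) (C * (1 + ‖y‖)) ?_
  filter_upwards [hb.norm_le] with u hu
  exact (hu _).trans (by gcongr; exact y.norm_coe_le_norm u)

theorem norm_fderiv_le (hb : IsCaratheodory μ (k + 1) C b) :
    ∀ᵐ u ∂μ, ∀ x, ‖fderiv ℝ (b u) x‖ ≤ C := by
  filter_upwards [hb.norm_iteratedFDeriv_le] with u hu x
  rw [← norm_iteratedFDeriv_one]
  exact hu 1 le_rfl (by omega) x

theorem differentiable (hb : IsCaratheodory μ (k + 1) C b) :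
    ∀ᵐ u ∂μ, Differentiable ℝ (b u) := by
  filter_upwards [hb.contDiff] with u hu
  exact hu.differentiable (by simp)

theorem lipschitzWith (hb : IsCaratheodory μ (k + 1) C b) : ∀ᵐ u ∂μ, LipschitzWith C (b u) := by
  filter_upwards [hb.differentiable, hb.norm_fderiv_le] with u hdiff hle
  exact lipschitzWith_of_nnnorm_fderiv_le hdiff hle

protected theorem fderiv (hb : IsCaratheodory μ (k + 1) C b) :
    IsCaratheodory μ k C (fun u ↦ fderiv ℝ (b u)) where
  contDiff := by
    filter_upwards [hb.contDiff] with u hu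
    exact hu.fderiv_right (by simp)
  norm_le := by
    filter_upwards [hb.norm_fderiv_le] with u hu x
    exact (hu x).trans (le_mul_of_one_le_right C.2 (by simp))
  norm_iteratedFDeriv_le := by
    filter_upwards [hb.norm_iteratedFDeriv_le] with u hu j _ hj x
    rw [norm_iteratedFDeriv_fderiv]
    exact hu (j + 1) (by omega) (by omega) x
  aestronglyMeasurable_iteratedFDeriv j hj y := by
    convert! (continuousMultilinearCurryRightEquiv' ℝ j E G).continuous.comp_aestronglyMeasurable
      (hb.aestronglyMeasurable_iteratedFDeriv (j + 1) (by omega) y) using 2 with u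
    rw [iteratedFDeriv_succ_eq_comp_right, Function.comp_apply,
      LinearIsometryEquiv.apply_symm_apply]

theorem norm_linearization_remainder_le (hb : IsCaratheodory μ (k + 1) C b) (y z : α →ᵇ E) :
    ∀ᵐ u ∂μ, ‖b u (z u) - b u (y u) - fderiv ℝ (b u) (y u) (z u - y u)‖ ≤ 2 * C * ‖z - y‖ := by
  filter_upwards [hb.lipschitzWith, hb.norm_fderiv_le] with u hlip hle
  calc
    _ ≤ ‖b u (z u) - b u (y u)‖ + ‖fderiv ℝ (b u) (y u) (z u - y u)‖ := norm_sub_le _ _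
    _ ≤ C * ‖z u - y u‖ + C * ‖z u - y u‖ :=
      add_le_add (hlip.norm_sub_le _ _) ((fderiv ℝ (b u) (y u)).le_of_opNorm_le (hle _) _)
    _ = 2 * C * ‖(z - y) u‖ := by rw [BoundedContinuousFunction.sub_apply]; ring
    _ ≤ 2 * C * ‖z - y‖ := by gcongr; exact (z - y).norm_coe_le_norm u

theorem tendsto_linearization_remainder (hb : IsCaratheodory μ (k + 1) C b) (y : α →ᵇ E) :
    ∀ᵐ u ∂μ, Tendsto (fun z : α →ᵇ E ↦ ‖z - y‖⁻¹ •
      (b u (z u) - b u (y u) - fderiv ℝ (b u) (y u) (z u - y u))) (𝓝 y) (𝓝 0) := by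
  filter_upwards [hb.differentiable] with u hdiff
  have hcomp : HasFDerivAt (fun z : α →ᵇ E ↦ b u (z u))
      ((fderiv ℝ (b u) (y u)).comp (BoundedContinuousFunction.evalCLM ℝ u)) y :=
    HasFDerivAt.comp (g := b u) y (hdiff (y u)).hasFDerivAt
      (BoundedContinuousFunction.evalCLM (β := E) ℝ u).hasFDerivAt
  rw [tendsto_zero_iff_norm_tendsto_zero]
  simpa only [norm_smul, norm_inv, norm_norm] using! hasFDerivAt_iff_tendsto.1 hcomp

variable [IsFiniteMeasure μ]

/-- The Nemytskii (superposition) operator `y ↦ b(·, y ·)`, as a map from bounded continuous curves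
to `L¹`. -/
def nemytskii (hb : IsCaratheodory μ k C b) (y : α →ᵇ E) : α →₁[μ] G :=
  (hb.integrable_comp y).toL1 fun u ↦ b u (y u)

theorem coeFn_nemytskii (hb : IsCaratheodory μ k C b) (y : α →ᵇ E) :
    hb.nemytskii y =ᵐ[μ] fun u ↦ b u (y u) :=
  (hb.integrable_comp y).coeFn_toL1

theorem continuous_nemytskii (hb : IsCaratheodory μ k C b) : Continuous hb.nemytskii := by
  refine continuous_iff_continuousAt.2 fun y ↦ ?_
  refine tendsto_toL1_of_dominated (fun _ ↦ C * (1 + (‖y‖ + 1))) hb.integrable_comp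
    (hb.integrable_comp y) (integrable_const _) ?_ ?_
  · filter_upwards [continuous_norm.continuousAt.eventually (gt_mem_nhds (lt_add_one ‖y‖))]
      with z hz
    filter_upwards [hb.norm_le] with u hu
    exact (hu _).trans (by gcongr; exact (z.norm_coe_le_norm u).trans hz.le)
  · filter_upwards [hb.contDiff] with u hu
    exact (hu.continuous.comp (continuous_eval_const u)).tendsto y

theorem norm_nemytskii_sub_le (hb : IsCaratheodory μ (k + 1) C b) (y z : α →ᵇ E) :
    ∀ᵐ u ∂μ, ‖(hb.nemytskii y - hb.nemytskii z) u‖ ≤ C * ‖(y - z) u‖ := by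
  filter_upwards [hb.lipschitzWith, Lp.coeFn_sub (hb.nemytskii y) (hb.nemytskii z),
    hb.coeFn_nemytskii y, hb.coeFn_nemytskii z] with u hlip hsub hy hz
  rw [hsub, Pi.sub_apply, hy, hz]
  exact hlip.norm_sub_le _ _

end IsCaratheodory

variable [BorelSpace α] [SecondCountableTopologyEither α E] (μ : Measure α) [IsFiniteMeasure μ]

/-- Pointwise evaluation `(A, h) ↦ A(·) h(·)` of an `L¹` family of operators along a bounded
continuous curve, as a continuous bilinear map into `L¹`. -/
def applyL1 : (α →₁[μ] (E →L[ℝ] G)) →L[ℝ] (α →ᵇ E) →L[ℝ] (α →₁[μ] G) :=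
  ((ContinuousLinearMap.id ℝ (E →L[ℝ] G)).holderL μ 1 ∞ 1).bilinearComp
    (ContinuousLinearMap.id ℝ _) (BoundedContinuousFunction.toLp ∞ μ ℝ)

variable {μ}

theorem coeFn_applyL1 (A : α →₁[μ] (E →L[ℝ] G)) (h : α →ᵇ E) :
    applyL1 μ A h =ᵐ[μ] fun u ↦ A u (h u) := by
  have hholder := (ContinuousLinearMap.id ℝ (E →L[ℝ] G)).coeFn_holder (r := 1) A
    (BoundedContinuousFunction.toLp ∞ μ ℝ h)
  filter_upwards [hholder, BoundedContinuousFunction.coeFn_toLp ∞ μ ℝ h] with u hA hh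
  rw [← hh]
  exact hA

namespace IsCaratheodory

variable {k : ℕ} {C : ℝ≥0} {b : α → E → G}

theorem coeFn_applyL1_nemytskii_fderiv (hb : IsCaratheodory μ (k + 1) C b) (y h : α →ᵇ E) :
    applyL1 μ (hb.fderiv.nemytskii y) h =ᵐ[μ] fun u ↦ fderiv ℝ (b u) (y u) (h u) := by
  filter_upwards [coeFn_applyL1 (hb.fderiv.nemytskii y) h, hb.fderiv.coeFn_nemytskii y]
    with u happly hy
  rw [happly, hy]

theorem norm_applyL1_nemytskii_fderiv_le (hb : IsCaratheodory μ (k + 1) C b) (y h : α →ᵇ E) :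
    ∀ᵐ u ∂μ, ‖applyL1 μ (hb.fderiv.nemytskii y) h u‖ ≤ C * ‖h u‖ := by
  filter_upwards [hb.coeFn_applyL1_nemytskii_fderiv y h, hb.norm_fderiv_le] with u hu hle
  rw [hu]
  exact (fderiv ℝ (b u) (y u)).le_of_opNorm_le (hle _) _

theorem integrable_fderiv_apply (hb : IsCaratheodory μ (k + 1) C b) (y h : α →ᵇ E) :
    Integrable (fun u ↦ fderiv ℝ (b u) (y u) (h u)) μ :=
  (L1.integrable_coeFn _).congr (hb.coeFn_applyL1_nemytskii_fderiv y h)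

theorem applyL1_nemytskii_fderiv (hb : IsCaratheodory μ (k + 1) C b) (y h : α →ᵇ E) :
    applyL1 μ (hb.fderiv.nemytskii y) h =
      (hb.integrable_fderiv_apply y h).toL1 (fun u ↦ fderiv ℝ (b u) (y u) (h u)) :=
  Lp.ext <| (hb.coeFn_applyL1_nemytskii_fderiv y h).trans
    (hb.integrable_fderiv_apply y h).coeFn_toL1.symm

theorem hasFDerivAt_nemytskii (hb : IsCaratheodory μ (k + 1) C b) (y : α →ᵇ E) :
    HasFDerivAt hb.nemytskii (applyL1 μ (hb.fderiv.nemytskii y)) y := by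
  let R (z : α →ᵇ E) (u : α) : G := b u (z u) - b u (y u) - fderiv ℝ (b u) (y u) (z u - y u)
  have hR (z : α →ᵇ E) : Integrable (R z) μ :=
    ((hb.integrable_comp z).sub (hb.integrable_comp y)).sub (hb.integrable_fderiv_apply y (z - y))
  have hR_toL1 (z : α →ᵇ E) : hb.nemytskii z - hb.nemytskii y -
      applyL1 μ (hb.fderiv.nemytskii y) (z - y) = (hR z).toL1 (R z) := by
    rw [hb.applyL1_nemytskii_fderiv, nemytskii, nemytskii, ← Integrable.toL1_sub,
      ← Integrable.toL1_sub]
    rfl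
  have hlim : Tendsto (fun z ↦ ((hR z).smul ‖z - y‖⁻¹).toL1 (‖z - y‖⁻¹ • R z)) (𝓝 y)
      (𝓝 ((integrable_zero α G μ).toL1 0)) := by
    refine tendsto_toL1_of_dominated (fun _ ↦ 2 * C) _ (integrable_zero α G μ) (integrable_const _)
      (.of_forall fun z ↦ ?_) (hb.tendsto_linearization_remainder y)
    filter_upwards [hb.norm_linearization_remainder_le y z] with u hu
    rw [Pi.smul_apply, norm_smul, norm_inv, norm_norm]
    exact inv_mul_le_of_le_mul₀ (norm_nonneg _) (by positivity) (hu.trans_eq (mul_comm _ _))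
  rw [Integrable.toL1_zero, tendsto_zero_iff_norm_tendsto_zero] at hlim
  rw [hasFDerivAt_iff_tendsto]
  refine hlim.congr fun z ↦ ?_
  rw [hR_toL1, Integrable.toL1_smul' _ (hR z), norm_smul, norm_inv, norm_norm]

theorem contDiff_nemytskii (hb : IsCaratheodory μ k C b) : ContDiff ℝ k hb.nemytskii := by
  induction k generalizing G with
  | zero => exact contDiff_zero.2 hb.continuous_nemytskii
  | succ k ih =>
    exact contDiff_succ_iff_hasFDerivAt.2
      ⟨fun y ↦ applyL1 μ (hb.fderiv.nemytskii y),
        (applyL1 (E := E) (G := G) μ).contDiff.comp (ih hb.fderiv), hb.hasFDerivAt_nemytskii⟩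

end IsCaratheodory

end Nemytskii


section Primitive

variable {E G : Type*} [NormedAddCommGroup E] [NormedAddCommGroup G] [NormedSpace ℝ G]
  {μ : Measure ℝ}

theorem norm_setIntegral_coeFn_le (f : ℝ →₁[μ] G) (s : Set ℝ) : ‖∫ u in s, f u ∂μ‖ ≤ ‖f‖ := by
  rw [L1.norm_eq_integral_norm]
  exact (MeasureTheory.norm_integral_le_integral_norm _).trans <|
    setIntegral_le_integral (L1.integrable_coeFn f).norm (.of_forall fun _ ↦ norm_nonneg _)

theorem continuous_setIntegral_Iic [NullSingletonClass μ] {f : ℝ → G} (hf : Integrable f μ) :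
    Continuous fun r ↦ ∫ u in Iic r, f u ∂μ := by
  have heq (r : ℝ) : ∫ u in Iic r, f u ∂μ = (∫ u in (0 : ℝ)..r, f u ∂μ) + ∫ u in Iic 0, f u ∂μ :=
    sub_eq_iff_eq_add.1 (integral_Iic_sub_Iic hf.integrableOn hf.integrableOn)
  exact ((hf.continuous_primitive 0).add continuous_const).congr fun r ↦ (heq r).symm

variable (μ) in
/-- The primitive `r ↦ ∫_{(-∞, r]} f dμ` of an integrable function, as a continuous linear map into
the bounded continuous functions. -/
def primitiveL1 [NullSingletonClass μ] : (ℝ →₁[μ] G) →L[ℝ] (ℝ →ᵇ G) :=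
  LinearMap.mkContinuous
    { toFun f := .ofNormedAddCommGroup (fun r ↦ ∫ u in Iic r, f u ∂μ)
        (continuous_setIntegral_Iic (L1.integrable_coeFn f)) ‖f‖
        fun r ↦ norm_setIntegral_coeFn_le f (Iic r)
      map_add' f g := by
        ext r
        exact (setIntegral_congr_ae measurableSet_Iic
          ((Lp.coeFn_add f g).mono fun _ hu _ ↦ hu)).trans <|
          integral_add (L1.integrable_coeFn f).integrableOn (L1.integrable_coeFn g).integrableOn
      map_smul' c f := by
        ext r
        exact (setIntegral_congr_ae measurableSet_Iic
          ((Lp.coeFn_smul c f).mono fun _ hu _ ↦ hu)).trans (integral_smul c f) } 1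
    fun f ↦ (BoundedContinuousFunction.norm_ofNormedAddCommGroup_le _ (norm_nonneg f)
      fun r ↦ norm_setIntegral_coeFn_le f (Iic r)).trans_eq (one_mul _).symm

theorem primitiveL1_apply [NullSingletonClass μ] (f : ℝ →₁[μ] G) (r : ℝ) :
    primitiveL1 μ f r = ∫ u in Iic r, f u ∂μ :=
  rfl

theorem norm_primitiveL1_apply_le [NullSingletonClass μ] [IsFiniteMeasure μ] {f : ℝ →₁[μ] G}
    {h : ℝ →ᵇ E} {C : ℝ} (hf : ∀ᵐ u ∂μ, ‖f u‖ ≤ C * ‖h u‖) (r : ℝ) :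
    ‖primitiveL1 μ f r‖ ≤ C * ∫ u in Iic r, ‖h u‖ ∂μ := by
  rw [primitiveL1_apply, ← MeasureTheory.integral_const_mul]
  refine norm_integral_le_of_norm_le ?_ (ae_restrict_of_ae hf)
  exact ((h.normComp.integrable μ).const_mul C).integrableOn

end Primitive

section Volterra

variable {E : Type*} [NormedAddCommGroup E] {T : ℝ} {C : ℝ≥0}

theorem setIntegral_Iic_restrict_Ioc [NormedSpace ℝ E] (hT : 0 ≤ T) (f : ℝ → E) (r : ℝ) :
    ∫ u in Iic r, f u ∂(volume.restrict (Ioc 0 T)) = ∫ u in (0 : ℝ)..(projIcc 0 T hT r), f u := by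
  have hset : Iic r ∩ Ioc 0 T = Ioc 0 (projIcc 0 T hT r : ℝ) := by
    ext u
    simp only [coe_projIcc, mem_inter_iff, mem_Iic, mem_Ioc, le_max_iff, le_min_iff]
    grind
  rw [integral_of_le (projIcc 0 T hT r).2.1, Measure.restrict_restrict measurableSet_Iic, hset]

theorem integral_pow_div_factorial (a r : ℝ) (n : ℕ) :
    a * ∫ u in (0 : ℝ)..r, (a * u) ^ n / n.factorial = (a * r) ^ (n + 1) / (n + 1).factorial := by
  simp_rw [mul_pow, mul_div_right_comm, intervalIntegral.integral_const_mul, integral_pow,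
    Nat.factorial_succ]
  push_cast
  field_simp
  ring

theorem norm_apply_le_of_volterra (hT : 0 ≤ T) {v : ℕ → ℝ →ᵇ E}
    (hv : ∀ n r, ‖v (n + 1) r‖ ≤ C * ∫ u in Iic r, ‖v n u‖ ∂(volume.restrict (Ioc 0 T)))
    (n : ℕ) (r : ℝ) : ‖v n r‖ ≤ (C * projIcc 0 T hT r) ^ n / n.factorial * ‖v 0‖ := by
  induction n generalizing r with
  | zero => simpa using (v 0).norm_coe_le_norm r
  | succ n ih =>
    set p := projIcc 0 T hT r
    have ih_Icc (u : ℝ) (hu : u ∈ Icc 0 (p : ℝ)) :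
        ‖v n u‖ ≤ (C * u) ^ n / n.factorial * ‖v 0‖ := by
      simpa only [projIcc_of_mem hT ⟨hu.1, hu.2.trans p.2.2⟩] using ih u
    calc
      _ ≤ C * ∫ u in (0 : ℝ)..p, ‖v n u‖ := by
        rw [← setIntegral_Iic_restrict_Ioc]
        exact hv n r
      _ ≤ C * ∫ u in (0 : ℝ)..p, (C * u) ^ n / n.factorial * ‖v 0‖ := by
        gcongr
        refine integral_mono_on p.2.1 ((v n).continuous.norm.intervalIntegrable _ _) ?_ ih_Icc
        exact Continuous.intervalIntegrable (by fun_prop) _ _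
      _ = (C * p) ^ (n + 1) / (n + 1).factorial * ‖v 0‖ := by
        rw [intervalIntegral.integral_mul_const, ← mul_assoc, integral_pow_div_factorial]

theorem norm_le_of_volterra (hT : 0 ≤ T) {v : ℕ → ℝ →ᵇ E}
    (hv : ∀ n r, ‖v (n + 1) r‖ ≤ C * ∫ u in Iic r, ‖v n u‖ ∂(volume.restrict (Ioc 0 T)))
    (n : ℕ) : ‖v n‖ ≤ (C * T) ^ n / n.factorial * ‖v 0‖ := by
  refine (BoundedContinuousFunction.norm_le (by positivity)).2 fun r ↦ ?_
  obtain ⟨hp₀, hpT⟩ := (projIcc 0 T hT r).2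
  exact (norm_apply_le_of_volterra hT hv n r).trans (by gcongr)

theorem exists_pow_div_factorial_lt_one (a : ℝ) : ∃ n : ℕ, a ^ n / n.factorial < 1 :=
  ((FloorSemiring.tendsto_pow_div_factorial_atTop a).eventually_lt_const one_pos).exists

theorem eq_zero_of_volterra (hT : 0 ≤ T) {h : ℝ →ᵇ E}
    (hh : ∀ r, ‖h r‖ ≤ C * ∫ u in Iic r, ‖h u‖ ∂(volume.restrict (Ioc 0 T))) : h = 0 := by
  obtain ⟨n, hn⟩ := exists_pow_div_factorial_lt_one (C * T)
  have hle := norm_le_of_volterra hT (v := fun _ ↦ h) (fun _ ↦ hh) n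
  by_contra hne
  exact (mul_lt_of_lt_one_left (norm_pos_iff.2 hne) hn).not_ge hle

theorem isUnit_one_sub_of_volterra [NormedSpace ℝ E] [CompleteSpace E] (hT : 0 ≤ T)
    {K : (ℝ →ᵇ E) →L[ℝ] (ℝ →ᵇ E)}
    (hK : ∀ h r, ‖K h r‖ ≤ C * ∫ u in Iic r, ‖h u‖ ∂(volume.restrict (Ioc 0 T))) :
    IsUnit (1 - K) := by
  obtain ⟨n, hn⟩ := exists_pow_div_factorial_lt_one (C * T)
  have hpow (h : ℝ →ᵇ E) : ‖(K ^ n) h‖ ≤ (C * T) ^ n / n.factorial * ‖h‖ :=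
    norm_le_of_volterra hT (v := fun i ↦ (K ^ i) h) (fun i r ↦ by
      rw [pow_succ']
      exact hK ((K ^ i) h) r) n
  exact isUnit_one_sub_of_isUnit_one_sub_pow <| isUnit_one_sub_of_norm_lt_one <|
    (ContinuousLinearMap.opNorm_le_bound _ (by positivity) hpow).trans_lt hn

end Volterra

section Curves

variable {E : Type*} [NormedAddCommGroup E]

/-- The curve on `[0, T]` extended to `ℝ` by its end values, as a bounded continuous function. -/
def extendIcc {T : ℝ} (hT : 0 ≤ T) {f : ℝ → E} (hf : ContinuousOn f (Icc 0 T)) : ℝ →ᵇ E :=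
  (BoundedContinuousFunction.mkOfCompact ⟨_, hf.domRestrict⟩).compContinuous
    ⟨projIcc 0 T hT, continuous_projIcc⟩

theorem extendIcc_apply {T : ℝ} (hT : 0 ≤ T) {f : ℝ → E} (hf : ContinuousOn f (Icc 0 T)) (r : ℝ) :
    extendIcc hT hf r = f (projIcc 0 T hT r) :=
  rfl

theorem isBoundedLinearMap_boundedContinuousFunction_const (α : Type*) [TopologicalSpace α]
    [NormedSpace ℝ E] : IsBoundedLinearMap ℝ (BoundedContinuousFunction.const α : E → α →ᵇ E) :=
  IsLinearMap.with_bound ⟨fun _ _ ↦ rfl, fun _ _ ↦ rfl⟩ 1 fun x ↦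
    (BoundedContinuousFunction.norm_const_le x).trans_eq (one_mul _).symm

end Curves

namespace IsCaratheodory

variable {E : Type*} [NormedAddCommGroup E] [NormedSpace ℝ E] {μ : Measure ℝ}
  [IsFiniteMeasure μ] [NullSingletonClass μ] {T : ℝ} {k : ℕ} {C : ℝ≥0} {b : ℝ → E → E}

/-- The map `y ↦ y - ∫ b(u, y u) du` on curves, under which the solutions of
`X = x + ∫ b(u, X u) du + w` are the preimages of the curve `x + w`. -/
def volterraMap (hb : IsCaratheodory μ k C b) (y : ℝ →ᵇ E) : ℝ →ᵇ E :=
  y - primitiveL1 μ (hb.nemytskii y)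

theorem contDiff_volterraMap (hb : IsCaratheodory μ k C b) : ContDiff ℝ k hb.volterraMap :=
  contDiff_id.sub ((primitiveL1 (G := E) μ).contDiff.comp hb.contDiff_nemytskii)

theorem hasFDerivAt_volterraMap (hb : IsCaratheodory μ (k + 1) C b) (y : ℝ →ᵇ E) :
    HasFDerivAt hb.volterraMap (1 - primitiveL1 μ ∘L applyL1 μ (hb.fderiv.nemytskii y)) y :=
  (hasFDerivAt_id y).sub
    ((primitiveL1 (G := E) μ).hasFDerivAt.comp y (hb.hasFDerivAt_nemytskii y))

theorem injective_volterraMap (hT : 0 ≤ T)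
    (hb : IsCaratheodory (volume.restrict (Ioc 0 T)) (k + 1) C b) :
    Function.Injective hb.volterraMap := by
  intro y z hyz
  have hsub : y - z = primitiveL1 _ (hb.nemytskii y - hb.nemytskii z) := by
    rw [map_sub]
    exact sub_eq_sub_iff_sub_eq_sub.1 hyz
  refine sub_eq_zero.1 (eq_zero_of_volterra (C := C) hT fun r ↦ ?_)
  conv_lhs => rw [hsub]
  exact norm_primitiveL1_apply_le (hb.norm_nemytskii_sub_le y z) r

theorem volterraMap_extendIcc_apply (hT : 0 ≤ T)
    (hb : IsCaratheodory (volume.restrict (Ioc 0 T)) k C b) {f : ℝ → E}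
    (hf : ContinuousOn f (Icc 0 T)) (r : ℝ) :
    hb.volterraMap (extendIcc hT hf) r =
      f (projIcc 0 T hT r) - ∫ u in (0 : ℝ)..(projIcc 0 T hT r), b u (f u) := by
  have hcoe : ∀ᵐ u, u ∈ Ioc 0 T → hb.nemytskii (extendIcc hT hf) u = b u (f u) := by
    filter_upwards [(ae_restrict_iff' measurableSet_Ioc).1
      (hb.coeFn_nemytskii (extendIcc hT hf))] with u hu hmem
    rw [hu hmem, extendIcc_apply, projIcc_of_mem hT (Ioc_subset_Icc_self hmem)]
  rw [volterraMap, BoundedContinuousFunction.sub_apply, extendIcc_apply, primitiveL1_apply,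
    setIntegral_Iic_restrict_Ioc hT]
  obtain ⟨hp₀, hpT⟩ := (projIcc 0 T hT r).2
  congr 1
  refine integral_congr_ae (hcoe.mono fun u hu hmem ↦ ?_)
  rw [uIoc_of_le hp₀] at hmem
  exact hu ⟨hmem.1, hmem.2.trans hpT⟩

variable [CompleteSpace E]

theorem exists_equiv_hasFDerivAt_volterraMap (hT : 0 ≤ T)
    (hb : IsCaratheodory (volume.restrict (Ioc 0 T)) (k + 1) C b) (y : ℝ →ᵇ E) :
    ∃ e : (ℝ →ᵇ E) ≃L[ℝ] (ℝ →ᵇ E), HasFDerivAt hb.volterraMap (e : (ℝ →ᵇ E) →L[ℝ] (ℝ →ᵇ E)) y := by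
  obtain ⟨U, hU⟩ := isUnit_one_sub_of_volterra hT
    (K := primitiveL1 _ ∘L applyL1 _ (hb.fderiv.nemytskii y)) fun h ↦
    norm_primitiveL1_apply_le (hb.norm_applyL1_nemytskii_fderiv_le y h)
  exact ⟨ContinuousLinearEquiv.unitsEquiv ℝ _ U,
    (hb.hasFDerivAt_volterraMap y).congr_fderiv hU.symm⟩

end IsCaratheodory

section Flow

variable {E : Type*} [NormedAddCommGroup E] [NormedSpace ℝ E] {T : ℝ} {k : ℕ} {C : ℝ≥0}
  {b φ : ℝ → E → E} {w : ℝ → E}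

theorem volterraMap_extendIcc_flow (hb : IsCaratheodory (volume.restrict (Ioc 0 T)) k C b)
    (hT : 0 ≤ T) (hφ : ∀ x, ContinuousOn (fun r ↦ φ r x) (Icc 0 T) ∧
      ∀ r ∈ Icc 0 T, φ r x = x + (∫ u in (0 : ℝ)..r, b u (φ u x)) + w r) (x : E) :
    hb.volterraMap (extendIcc hT (hφ x).1) =
      .const ℝ x + hb.volterraMap (extendIcc hT (hφ 0).1) := by
  have hval (x : E) (r : ℝ) :
      hb.volterraMap (extendIcc hT (hφ x).1) r = x + w (projIcc 0 T hT r) := by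
    rw [hb.volterraMap_extendIcc_apply, (hφ x).2 _ (projIcc 0 T hT r).2]
    abel
  ext r
  rw [BoundedContinuousFunction.add_apply, BoundedContinuousFunction.const_apply, hval, hval,
    zero_add]

theorem contDiff_extendIcc_flow [CompleteSpace E] (hk : k ≠ 0)
    (hb : IsCaratheodory (volume.restrict (Ioc 0 T)) k C b) (hT : 0 ≤ T)
    (hφ : ∀ x, ContinuousOn (fun r ↦ φ r x) (Icc 0 T) ∧
      ∀ r ∈ Icc 0 T, φ r x = x + (∫ u in (0 : ℝ)..r, b u (φ u x)) + w r) :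
    ContDiff ℝ k fun x ↦ extendIcc hT (hφ x).1 := by
  obtain ⟨k, rfl⟩ := Nat.exists_eq_succ_of_ne_zero hk
  have hdata : ContDiff ℝ (k + 1 : ℕ) fun x ↦ hb.volterraMap (extendIcc hT (hφ x).1) := by
    rw [funext (volterraMap_extendIcc_flow hb hT hφ)]
    exact (isBoundedLinearMap_boundedContinuousFunction_const ℝ).contDiff.add contDiff_const
  refine contDiff_iff_contDiffAt.2 fun x ↦ ?_
  obtain ⟨e, he⟩ := hb.exists_equiv_hasFDerivAt_volterraMap hT (extendIcc hT (hφ x).1)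
  exact contDiffAt_of_comp_injective (by exact_mod_cast hk) (hb.injective_volterraMap hT)
    hb.contDiff_volterraMap.contDiffAt he hdata.contDiffAt

theorem flow_contDiff_general [CompleteSpace E] (hk : k ≠ 0)
    (hb : IsCaratheodory (volume.restrict (Ioc 0 T)) k C b)
    (hφ : ∀ x, ContinuousOn (fun r ↦ φ r x) (Icc 0 T) ∧
      ∀ r ∈ Icc 0 T, φ r x = x + (∫ u in (0 : ℝ)..r, b u (φ u x)) + w r) :
    ∀ t ∈ Icc 0 T, ContDiff ℝ k (φ t) := by
  intro t ht
  have hT : 0 ≤ T := ht.1.trans ht.2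
  have hφt : φ t = fun x ↦ extendIcc hT (hφ x).1 t := by
    ext1 x
    rw [extendIcc_apply, projIcc_of_mem hT ht]
  rw [hφt]
  exact (BoundedContinuousFunction.evalCLM (β := E) ℝ t).contDiff.comp
    (contDiff_extendIcc_flow hk hb hT hφ)

end Flow

end

/-- If `b` has linear growth and is `k` times continuously
differentiable in space with all spatial derivatives of order `1, …, k` bounded by `M`,
then for every `t ∈ [0,T]` the flow map `x ↦ φ_{0,t}(x)` is `k` times continuously
differentiable on `ℝ^d`. -/
theorem flow_contDiff
    (T : ℝ) (hT : 0 < T) (d : ℕ) (hd : 1 ≤ d) (k : ℕ) (hk : 1 ≤ k)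
    (b : ℝ → EuclideanSpace ℝ (Fin d) → EuclideanSpace ℝ (Fin d))
    (hbmeas : Measurable (Function.uncurry b))
    (M C₀ : ℝ) (hM : 0 < M) (hC₀ : 0 < C₀)
    (hbgrowth : ∀ t ∈ Set.Icc (0 : ℝ) T, ∀ y : EuclideanSpace ℝ (Fin d),
      ‖b t y‖ ≤ C₀ * (1 + ‖y‖))
    (hbCk : ∀ t ∈ Set.Icc (0 : ℝ) T, ContDiff ℝ k (b t))
    (hDb : ∀ j : ℕ, 1 ≤ j → j ≤ k → ∀ t ∈ Set.Icc (0 : ℝ) T,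
      ∀ x : EuclideanSpace ℝ (Fin d), ‖iteratedFDeriv ℝ j (b t) x‖ ≤ M)
    (hDbmeas : ∀ j : ℕ, j ≤ k → StronglyMeasurable
      (fun p : ℝ × EuclideanSpace ℝ (Fin d) => iteratedFDeriv ℝ j (b p.1) p.2))
    (w : ℝ → EuclideanSpace ℝ (Fin d))
    (hw : ContinuousOn w (Set.Icc (0 : ℝ) T)) (hw0 : w 0 = 0)
    (φ : ℝ → EuclideanSpace ℝ (Fin d) → EuclideanSpace ℝ (Fin d))
    (hφ : ∀ x : EuclideanSpace ℝ (Fin d),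
      ContinuousOn (fun r => φ r x) (Set.Icc (0 : ℝ) T) ∧
      ∀ r ∈ Set.Icc (0 : ℝ) T, φ r x = x + (∫ u in (0 : ℝ)..r, b u (φ u x)) + w r) :
    ∀ t ∈ Set.Icc (0 : ℝ) T, ContDiff ℝ k (φ t) := by
  have hIcc : ∀ᵐ u ∂volume.restrict (Set.Ioc 0 T), u ∈ Set.Icc 0 T :=
    (ae_restrict_mem measurableSet_Ioc).mono fun _ hu ↦ Set.Ioc_subset_Icc_self hu
  exact flow_contDiff_general (by omega) (IsCaratheodory.of_stronglyMeasurable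
    (hIcc.mono hbCk) (hIcc.mono hbgrowth)
    (hIcc.mono fun u hu j hj hjk ↦ hDb j hj hjk u hu) hDbmeas) hφ
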